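/- arXiv:2202.00136 — 2 statements merged into one kernel-verified Lean document; each statement's English description precedes it below -/
import Mathlib

section
/- There exist positive integers n1, n2 with n1 + n2 = 10 and a successful two-stage coding algorithm for the Z-channel of total length 10 correcting 1 asymmetric error whose message set has size 177. -/
/-- Hamming weight of a binary word: the number of ones. -/
def wt {n : ℕ} (a : Fin n → Bool) : ℕ :=
  (Finset.univ.filter (fun i => a i = true)).card

/-- N(a,b) = number of positions where a is 0 and b is 1. -/
def NN {n : ℕ} (a b : Fin n → Bool) : ℕ :=
  (Finset.univ.filter (fun i => a i = false ∧ b i = true)).card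

/-- The Z-distance d_Z(a,b) = max(N(a,b), N(b,a)). -/
def dZ {n : ℕ} (a b : Fin n → Bool) : ℕ := max (NN a b) (NN b a)

/-- A code correcting one asymmetric error: d_Z(a,b) ≥ 2 for distinct codewords. -/
def IsZCode {n : ℕ} (C : Finset (Fin n → Bool)) : Prop :=
  ∀ a ∈ C, ∀ b ∈ C, a ≠ b → 2 ≤ dZ a b

/-- The output ball B_1(a): words obtainable from a by at most one asymmetric (1→0) error. -/
def ball {n : ℕ} (a : Fin n → Bool) : Finset (Fin n → Bool) :=
  Finset.univ.filter (fun y => (∀ i, y i ≤ a i) ∧ wt a - wt y ≤ 1)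

/-- The number of free points of a code: words lying in no ball B_1(a), a ∈ C. -/
def freeCount {n : ℕ} (C : Finset (Fin n → Bool)) : ℕ :=
  (Finset.univ.filter (fun y => ∀ a ∈ C, y ∉ ball a)).card

/-- A two-stage coding algorithm (c1, c2, dec) of lengths n1, n2 with message set `Fin M`
is successful if it correctly decodes under at most one asymmetric error in total. -/
def TwoStageSuccess (n1 n2 M : ℕ)
    (c1 : Fin M → (Fin n1 → Bool))
    (c2 : Fin M → (Fin n1 → Bool) → (Fin n2 → Bool))
    (dec : (Fin n1 → Bool) → (Fin n2 → Bool) → Fin M) : Prop :=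
  ∀ (m : Fin M) (y1 : Fin n1 → Bool) (y2 : Fin n2 → Bool),
    (∀ i, y1 i ≤ c1 m i) → (∀ i, y2 i ≤ c2 m y1 i) →
    (wt (c1 m) - wt y1) + (wt (c2 m y1) - wt y2) ≤ 1 →
    dec y1 y2 = m

open Finset

lemma wt_mono {n : ℕ} {y z : Fin n → Bool} (h : ∀ i, y i ≤ z i) : wt y ≤ wt z :=
  card_le_card <| monotone_filter_right _ fun i _ hi => Bool.eq_true_of_true_le (hi ▸ h i)

lemma eq_of_le_of_wt_le {n : ℕ} {y z : Fin n → Bool} (h : ∀ i, y i ≤ z i)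
    (hwt : wt z ≤ wt y) : y = z := by
  have heq := eq_of_subset_of_card_le
    (monotone_filter_right univ fun i _ hi => Bool.eq_true_of_true_le (hi ▸ h i)) hwt
  funext i
  have hi := congrArg (i ∈ ·) heq
  simpa using hi

lemma NN_le_wt_sub_wt {n : ℕ} {y a b : Fin n → Bool} (ha : ∀ i, y i ≤ a i)
    (hb : ∀ i, y i ≤ b i) : NN a b ≤ wt b - wt y := by
  unfold NN wt
  rw [← card_sdiff_of_subset
    (monotone_filter_right univ fun i _ hi => Bool.eq_true_of_true_le (hi ▸ hb i))]
  refine card_le_card fun i hi => ?_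
  have := ha i
  simp only [mem_filter, mem_univ, true_and] at hi
  simp [hi.2, Bool.eq_false_of_le_false (hi.1 ▸ this)]

lemma mem_ball {n : ℕ} {a y : Fin n → Bool} :
    y ∈ ball a ↔ (∀ i, y i ≤ a i) ∧ wt a - wt y ≤ 1 := by
  simp [ball]

/-- Balls around distinct words of a code correcting one asymmetric error are disjoint. -/
lemma IsZCode.eq_of_mem_ball {n : ℕ} {C : Finset (Fin n → Bool)} (hC : IsZCode C)
    {a b y : Fin n → Bool} (ha : a ∈ C) (hb : b ∈ C) (hya : y ∈ ball a) (hyb : y ∈ ball b) :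
    a = b := by
  rw [mem_ball] at hya hyb
  by_contra hab
  have h := hC a ha b hb hab
  have h₁ := NN_le_wt_sub_wt hya.1 hyb.1
  have h₂ := NN_le_wt_sub_wt hyb.1 hya.1
  unfold dZ at h
  omega

/-- The words from which `y` is obtained by exactly one asymmetric error. -/
def upperCovers {n : ℕ} (y : Fin n → Bool) : Finset (Fin n → Bool) :=
  univ.filter fun z => (∀ i, y i ≤ z i) ∧ wt z = wt y + 1

lemma mem_upperCovers {n : ℕ} {y z : Fin n → Bool} :
    z ∈ upperCovers y ↔ (∀ i, y i ≤ z i) ∧ wt z = wt y + 1 := by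
  simp [upperCovers]

/-- A family of second-stage codes, indexed by the first-stage words, yields a two-stage algorithm
as soon as the free points of each code can accommodate all messages sent by an upper cover. -/
theorem exists_twoStageSuccess {n1 n2 M : ℕ} (C : (Fin n1 → Bool) → Finset (Fin n2 → Bool))
    (hC : ∀ y, IsZCode (C y))
    (hfree : ∀ y, ∑ z ∈ upperCovers y, #(C z) ≤ freeCount (C y))
    (hM : ∑ y, #(C y) = M) (hpos : 0 < M) :
    ∃ c1 c2 dec, TwoStageSuccess n1 n2 M c1 c2 dec := by
  classical
  have : Nonempty (Fin M) := ⟨⟨0, hpos⟩⟩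
  let e : Fin M ≃ Σ y, C y := (Fintype.equivFinOfCardEq (by simpa using hM)).symm
  have hf (y : Fin n1 → Bool) : ∃ f : (Σ z, C z) → (Fin n2 → Bool),
      Set.InjOn f {m | m.1 ∈ upperCovers y} ∧
      ∀ m, m.1 ∈ upperCovers y → ∀ a ∈ C y, f m ∉ ball a := by
    let S : Finset (Σ z, C z) := (upperCovers y).sigma fun _ => univ
    let F : Finset (Fin n2 → Bool) := univ.filter fun x => ∀ a ∈ C y, x ∉ ball a
    have hcard : #S ≤ #F := by simpa [S, F, freeCount] using hfree y
    obtain ⟨f, hmaps, hinj⟩ := S.finite_toSet.exists_injOn_of_encard_le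
      (t := (F : Set (Fin n2 → Bool)))
      (by simpa only [Set.encard_coe_eq_coe_finsetCard, Nat.cast_le] using hcard)
    refine ⟨f, hinj.mono fun m hm => by simpa [S] using hm, fun m hm => ?_⟩
    have hmS : m ∈ S := by simpa [S] using hm
    simpa [F] using hmaps hmS
  choose f hinj hf using hf
  let c2 (m : Fin M) (y : Fin n1 → Bool) : Fin n2 → Bool :=
    if (e m).1 = y then (e m).2 else f y (e m)
  let Received (m : Fin M) (y1 : Fin n1 → Bool) (y2 : Fin n2 → Bool) : Prop :=
    ((e m).1 = y1 ∧ y2 ∈ ball (e m).2.1) ∨ ((e m).1 ∈ upperCovers y1 ∧ y2 = f y1 (e m))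
  have hunique {m m' y1 y2} (h : Received m y1 y2) (h' : Received m' y1 y2) : m = m' := by
    apply e.injective
    rcases h with ⟨rfl, h⟩ | ⟨hc, rfl⟩ <;> rcases h' with ⟨heq, h'⟩ | ⟨hc', heq⟩
    · generalize e m = p at *
      generalize e m' = q at *
      obtain ⟨z, c⟩ := p
      obtain ⟨z', c'⟩ := q
      obtain rfl : z' = z := heq
      rw [Subtype.ext ((hC z').eq_of_mem_ball c.2 c'.2 h h')]
    · exact (hf _ _ hc' _ (e m).2.2 (heq ▸ h)).elim
    · subst heq
      exact (hf _ _ hc _ (e m').2.2 h').elim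
    · exact hinj _ hc hc' heq
  refine ⟨fun m => (e m).1, c2, fun y1 y2 => Classical.epsilon fun m => Received m y1 y2,
    fun m y1 y2 h1 h2 hwt => ?_⟩
  have hm : Received m y1 y2 := by
    have hw := wt_mono h1
    by_cases heq : (e m).1 = y1
    · simp only [c2, heq, if_true] at h2 hwt
      exact .inl ⟨heq, mem_ball.2 ⟨h2, by omega⟩⟩
    · have hlt : wt y1 < wt (e m).1 := by
        by_contra hle
        exact heq (eq_of_le_of_wt_le h1 (not_lt.1 hle)).symm
      simp only [c2, heq, if_false] at h2 hwt
      exact .inr ⟨mem_upperCovers.2 ⟨h1, by omega⟩, eq_of_le_of_wt_le h2 (by omega)⟩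
  exact hunique (Classical.epsilon_spec (p := fun m => Received m y1 y2) ⟨m, hm⟩) hm

/-- Flipping zeros of `y` one at a time produces all upper covers. -/
lemma card_upperCovers_le {n : ℕ} (y : Fin n → Bool) : #(upperCovers y) ≤ n - wt y := by
  have hsub : upperCovers y ⊆
      (univ.filter fun i => ¬ y i = true).image fun i => Function.update y i true := by
    intro z hz
    obtain ⟨hle, hwt⟩ := mem_upperCovers.1 hz
    obtain ⟨i, hi⟩ : ∃ i, y i ≠ z i := by
      by_contra! h
      rw [funext h] at hwt
      omega
    have hyi : y i = false ∧ z i = true := by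
      have := hle i
      revert this hi
      cases y i <;> cases z i <;> simp
    have hupd : ∀ j, Function.update y i true j ≤ z j := by
      intro j
      by_cases hj : j = i
      · subst hj; simp [hyi]
      · simpa [hj] using hle j
    have hlt : wt y < wt (Function.update y i true) := by
      by_contra h
      have hle' : ∀ j, y j ≤ Function.update y i true j := by
        intro j
        by_cases hj : j = i
        · subst hj; simp [hyi]
        · simp [hj]
      have := congrFun (eq_of_le_of_wt_le hle' (not_lt.1 h)) i
      simp [hyi] at this
    exact mem_image.2 ⟨i, by simp [hyi], eq_of_le_of_wt_le hupd (by omega)⟩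
  refine (card_le_card hsub).trans (card_image_le.trans ?_)
  have := card_filter_add_card_filter_not (s := (univ : Finset (Fin n))) (fun i => y i = true)
  simp only [card_univ, Fintype.card_fin] at this
  unfold wt
  omega

/-- Codes of length 4 used after receiving a first-stage word of a given weight. -/
def codeOfWeight (w : ℕ) : Finset (Fin 4 → Bool) :=
  if w ≤ 2 then {![false, false, false, false], ![true, true, false, false]}
  else if w ≤ 4 then
    {![false, false, false, false], ![true, true, false, false], ![false, false, true, true]}
  else
    {![false, false, false, false], ![true, true, false, false], ![false, false, true, true],
      ![true, true, true, true]}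

lemma isZCode_codeOfWeight (w : ℕ) : IsZCode (codeOfWeight w) := by
  unfold codeOfWeight IsZCode
  split_ifs <;> decide +kernel

lemma mul_card_codeOfWeight_succ_le {w : ℕ} (hw : w ≤ 6) :
    (6 - w) * #(codeOfWeight (w + 1)) ≤ freeCount (codeOfWeight w) := by
  interval_cases w <;> decide +kernel

theorem two_stage_length_10_size_177 :
    ∃ (n1 n2 : ℕ), 0 < n1 ∧ 0 < n2 ∧ n1 + n2 = 10 ∧
      ∃ (c1 : Fin 177 → (Fin n1 → Bool))
        (c2 : Fin 177 → (Fin n1 → Bool) → (Fin n2 → Bool))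
        (dec : (Fin n1 → Bool) → (Fin n2 → Bool) → Fin 177),
        TwoStageSuccess n1 n2 177 c1 c2 dec := by
  refine ⟨6, 4, by norm_num, by norm_num, by norm_num,
    exists_twoStageSuccess (fun y => codeOfWeight (wt y)) (fun _ => isZCode_codeOfWeight _)
      (fun y => ?_) (by decide +kernel) (by norm_num)⟩
  have hw : wt y ≤ 6 := (card_filter_le _ _).trans (by simp)
  calc ∑ z ∈ upperCovers y, #(codeOfWeight (wt z))
      = #(upperCovers y) * #(codeOfWeight (wt y + 1)) :=
        sum_const_nat fun z hz => by rw [(mem_upperCovers.1 hz).2]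
    _ ≤ (6 - wt y) * #(codeOfWeight (wt y + 1)) :=
        Nat.mul_le_mul_right _ (card_upperCovers_le y)
    _ ≤ freeCount (codeOfWeight (wt y)) := mul_card_codeOfWeight_succ_le hw
end

section
/- Every code C ⊆ {0,1}^9 with |C| = 62 and d_Z(a,b) ≥ 2 for all distinct a, b ∈ C has at most 177 free points. -/
/-- A family of finite sets that corrects one asymmetric error: of any two distinct members,
one has at least two elements outside the other. -/
def IsAsymFamily {α : Type*} [DecidableEq α] (F : Finset (Finset α)) : Prop :=
  ∀ S ∈ F, ∀ T ∈ F, (S \ T).card ≤ 1 → (T \ S).card ≤ 1 → S = T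

/-- The number of members of a family of a given size. -/
def levelCard {α : Type*} (F : Finset (Finset α)) (k : ℕ) : ℕ :=
  (F.filter (fun S => S.card = k)).card

theorem card_eq_sum_levelCard {α : Type*} [Fintype α] (F : Finset (Finset α)) :
    F.card = ∑ k ∈ Finset.range (Fintype.card α + 1), levelCard F k :=
  Finset.card_eq_sum_card_fiberwise fun S _ => by
    simpa [Nat.lt_succ_iff] using Finset.card_le_univ S

theorem sum_card_eq_sum_mul_levelCard {α : Type*} [Fintype α] (F : Finset (Finset α)) :
    ∑ S ∈ F, S.card = ∑ k ∈ Finset.range (Fintype.card α + 1), k * levelCard F k := by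
  rw [← Finset.sum_fiberwise_of_maps_to (s := F) (g := Finset.card)
    (t := Finset.range (Fintype.card α + 1))
    (fun S _ => by simpa [Nat.lt_succ_iff] using Finset.card_le_univ S)]
  refine Finset.sum_congr rfl fun k _ => ?_
  rw [Finset.sum_congr rfl (g := fun _ => k) (fun S hS => (Finset.mem_filter.1 hS).2),
    Finset.sum_const, smul_eq_mul, mul_comm, levelCard]

section Family

variable {α : Type*} [DecidableEq α]

/-- Members of bounded size with a large common part agree. -/
theorem IsAsymFamily.eq_of_subset_inter {F : Finset (Finset α)} (hF : IsAsymFamily F)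
    {S T P : Finset α} (hS : S ∈ F) (hT : T ∈ F) (hPS : P ⊆ S) (hPT : P ⊆ T)
    (hcS : S.card ≤ P.card + 1) (hcT : T.card ≤ P.card + 1) : S = T := by
  refine hF S hS T hT ?_ ?_
  · have h1 := Finset.card_le_card (Finset.sdiff_subset_sdiff (Finset.Subset.refl S) hPT)
    rw [Finset.card_sdiff_of_subset hPS] at h1
    omega
  · have h1 := Finset.card_le_card (Finset.sdiff_subset_sdiff (Finset.Subset.refl T) hPS)
    rw [Finset.card_sdiff_of_subset hPT] at h1
    omega

/-- Members that contain `P` and have at most two further elements are disjoint outside `P`. -/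
theorem IsAsymFamily.pairwiseDisjoint_sdiff {F G : Finset (Finset α)} (hF : IsAsymFamily F)
    (hGF : G ⊆ F) {P : Finset α} (hP : ∀ S ∈ G, P ⊆ S)
    (hc : ∀ S ∈ G, S.card ≤ P.card + 2) :
    (G : Set (Finset α)).PairwiseDisjoint (fun S => S \ P) := by
  intro S hS T hT hne
  rw [Function.onFun, Finset.disjoint_left]
  intro x hxS hxT
  rw [Finset.mem_sdiff] at hxS hxT
  refine hne (hF.eq_of_subset_inter (P := insert x P) (hGF hS) (hGF hT)
    (Finset.insert_subset hxS.1 (hP S hS)) (Finset.insert_subset hxT.1 (hP T hT)) ?_ ?_)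
  · rw [Finset.card_insert_of_notMem hxS.2]
    exact hc S hS
  · rw [Finset.card_insert_of_notMem hxS.2]
    exact hc T hT

theorem IsAsymFamily.card_biUnion_sdiff {F G : Finset (Finset α)} (hF : IsAsymFamily F)
    (hGF : G ⊆ F) {P : Finset α} (hP : ∀ S ∈ G, P ⊆ S)
    (hc : ∀ S ∈ G, S.card ≤ P.card + 2) :
    (G.biUnion (fun S => S \ P)).card = ∑ S ∈ G, (S.card - P.card) := by
  rw [Finset.card_biUnion (hF.pairwiseDisjoint_sdiff hGF hP hc)]
  exact Finset.sum_congr rfl fun S hS => Finset.card_sdiff_of_subset (hP S hS)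

theorem IsAsymFamily.sum_card_sub_le [Fintype α] {F G : Finset (Finset α)} (hF : IsAsymFamily F)
    (hGF : G ⊆ F) {P : Finset α} (hP : ∀ S ∈ G, P ⊆ S)
    (hc : ∀ S ∈ G, S.card ≤ P.card + 2) :
    ∑ S ∈ G, (S.card - P.card) ≤ Fintype.card α - P.card := by
  rw [← hF.card_biUnion_sdiff hGF hP hc, ← Finset.card_compl]
  refine Finset.card_le_card fun x hx => ?_
  obtain ⟨S, -, hxS⟩ := Finset.mem_biUnion.1 hx
  exact Finset.mem_compl.2 (Finset.mem_sdiff.1 hxS).2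

theorem IsAsymFamily.levelCard_zero_add_levelCard_one_le {F : Finset (Finset α)}
    (hF : IsAsymFamily F) : levelCard F 0 + levelCard F 1 ≤ 1 := by
  rw [levelCard, levelCard, ← Finset.card_union_of_disjoint, Finset.card_le_one]
  · intro S hS T hT
    simp only [Finset.mem_union, Finset.mem_filter] at hS hT
    refine hF.eq_of_subset_inter (P := ∅) (by tauto) (by tauto) (by simp) (by simp) ?_ ?_ <;>
      rw [Finset.card_empty] <;> omega
  · rw [Finset.disjoint_filter]
    omega

variable [Fintype α]

theorem IsAsymFamily.two_mul_levelCard_two_le {F : Finset (Finset α)} (hF : IsAsymFamily F) :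
    2 * levelCard F 2 ≤ Fintype.card α := by
  have h := hF.sum_card_sub_le (Finset.filter_subset (fun S => S.card = 2) F) (P := ∅)
    (by simp) (by simp +contextual)
  rw [Finset.sum_congr rfl (g := fun _ => 2) (by simp +contextual)] at h
  simp only [Finset.sum_const, smul_eq_mul, Finset.card_empty] at h
  rw [levelCard]
  omega

theorem IsAsymFamily.sum_levelCard_two_three_le {F : Finset (Finset α)} (hF : IsAsymFamily F) :
    2 * levelCard F 2 + 3 * levelCard F 3 ≤ Fintype.card α * (Fintype.card α / 2) := by
  have hd : Disjoint (F.filter (fun S => S.card = 2)) (F.filter (fun S => S.card = 3)) := by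
    rw [Finset.disjoint_filter]
    omega
  have key : ∀ i, (((F.filter (fun S => S.card = 2)) ∪ F.filter (fun S => S.card = 3)).filter
      (fun S => i ∈ S)).card ≤ Fintype.card α / 2 := by
    intro i
    have hd' := Finset.disjoint_filter_filter (p := fun S => i ∈ S) (q := fun S => i ∈ S) hd
    have h := hF.sum_card_sub_le (P := {i}) (G := ((F.filter (fun S => S.card = 2)) ∪
      F.filter (fun S => S.card = 3)).filter (fun S => i ∈ S))
      (fun S hS => by simp only [Finset.mem_union, Finset.mem_filter] at hS; tauto)
      (fun S hS => by simpa using (Finset.mem_filter.1 hS).2)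
      (fun S hS => by
        simp only [Finset.mem_union, Finset.mem_filter] at hS
        rw [Finset.card_singleton]
        omega)
    have h1 : ((F.filter (fun S => S.card = 2)).filter (fun S => i ∈ S)).card ≤ 1 := by
      rw [Finset.card_le_one]
      intro S hS T hT
      simp only [Finset.mem_filter] at hS hT
      refine hF.eq_of_subset_inter (P := {i}) hS.1.1 hT.1.1 (by simpa using hS.2)
        (by simpa using hT.2) ?_ ?_ <;> rw [Finset.card_singleton] <;> omega
    rw [Finset.filter_union] at h ⊢
    rw [Finset.sum_union hd', Finset.sum_congr rfl (g := fun _ => 1) (by simp +contextual),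
      Finset.sum_congr (s₁ := (F.filter (fun S => S.card = 3)).filter _) rfl
        (g := fun _ => 2) (by simp +contextual)] at h
    rw [Finset.card_union_of_disjoint hd']
    have hpos : 0 < Fintype.card α := Fintype.card_pos_iff.2 ⟨i⟩
    simp only [Finset.sum_const, smul_eq_mul, Finset.card_singleton] at h
    omega
  have h := Finset.sum_card_le key
  rw [Finset.sum_union hd, Finset.sum_congr rfl (g := fun _ => 2) (by simp +contextual),
    Finset.sum_congr (s₁ := F.filter (fun S => S.card = 3)) rfl
      (g := fun _ => 3) (by simp +contextual)] at h
  simp only [Finset.sum_const, smul_eq_mul] at h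
  rw [levelCard, levelCard]
  omega

theorem IsAsymFamily.four_mul_levelCard_four_le {F : Finset (Finset α)} (hF : IsAsymFamily F) :
    4 * levelCard F 4 ≤
      Fintype.card α * ((Fintype.card α - 1) * ((Fintype.card α - 2) / 2) / 3) := by
  have key : ∀ i, ((F.filter (fun S => S.card = 4)).filter (fun S => i ∈ S)).card ≤
      (Fintype.card α - 1) * ((Fintype.card α - 2) / 2) / 3 := by
    intro i
    have h := Finset.sum_card_inter_le (s := Finset.univ.erase i)
      (B := (F.filter (fun S => S.card = 4)).filter (fun S => i ∈ S))
      (n := (Fintype.card α - 2) / 2) (fun j hj => by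
        have hij : ({i, j} : Finset α).card = 2 :=
          Finset.card_pair (Finset.ne_of_mem_erase hj).symm
        have h := hF.sum_card_sub_le (P := {i, j})
          (G := ((F.filter (fun S => S.card = 4)).filter (fun S => i ∈ S)).filter
            (fun S => j ∈ S))
          (fun S hS => by simp only [Finset.mem_filter] at hS; tauto)
          (fun S hS => by
            simp only [Finset.mem_filter] at hS
            simp [Finset.insert_subset_iff, hS])
          (fun S hS => by
            simp only [Finset.mem_filter] at hS
            omega)
        rw [hij, Finset.sum_congr rfl (g := fun _ => 2) (by simp +contextual)] at h
        simp only [Finset.sum_const, smul_eq_mul] at h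
        omega)
    rw [Finset.sum_congr rfl (g := fun _ => 3) (fun S hS => by
      simp only [Finset.mem_filter] at hS
      rw [Finset.erase_inter, Finset.univ_inter, Finset.card_erase_of_mem hS.2, hS.1.2]),
      Finset.card_erase_of_mem (Finset.mem_univ i), Finset.card_univ] at h
    simp only [Finset.sum_const, smul_eq_mul] at h
    omega
  have h := Finset.sum_card_le key
  rw [Finset.sum_congr rfl (g := fun _ => 4) (by simp +contextual)] at h
  simp only [Finset.sum_const, smul_eq_mul] at h
  rw [levelCard]
  omega

/-- Over a ground set of odd size, each pair extends to a triple that no 4-set of the family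
contains. -/
theorem IsAsymFamily.exists_insert_not_subset {F : Finset (Finset α)} (hF : IsAsymFamily F)
    (hodd : Odd (Fintype.card α)) {P : Finset α} (hP : P.card = 2) :
    ∃ x ∉ P, ∀ S ∈ F, S.card = 4 → ¬ insert x P ⊆ S := by
  set G := (F.filter (fun S => S.card = 4)).filter (fun S => P ⊆ S) with hG
  have h := hF.card_biUnion_sdiff (P := P) (G := G)
    (fun S hS => by simp only [hG, Finset.mem_filter] at hS; tauto)
    (fun S hS => (Finset.mem_filter.1 hS).2)
    (fun S hS => by
      simp only [hG, Finset.mem_filter] at hS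
      omega)
  rw [hP, Finset.sum_congr rfl (g := fun _ => 2) (by simp +contextual [hG])] at h
  simp only [Finset.sum_const, smul_eq_mul] at h
  by_contra! hcon
  have hU : G.biUnion (fun S => S \ P) = Pᶜ := by
    ext x
    rw [Finset.mem_compl]
    constructor
    · intro hx
      obtain ⟨S, -, hxS⟩ := Finset.mem_biUnion.1 hx
      exact (Finset.mem_sdiff.1 hxS).2
    · intro hx
      obtain ⟨S, hS, hc, hsub⟩ := hcon x hx
      rw [Finset.insert_subset_iff] at hsub
      exact Finset.mem_biUnion.2 ⟨S, by simp [hG, hS, hc, hsub.2], by simp [hx, hsub.1]⟩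
  rw [hU, Finset.card_compl, hP] at h
  obtain ⟨k, hk⟩ := hodd
  have := Finset.card_le_univ P
  omega

theorem IsAsymFamily.levelCard_two_three_four_le {F : Finset (Finset α)} (hF : IsAsymFamily F)
    (hodd : Odd (Fintype.card α)) :
    levelCard F 2 + levelCard F 3 + 4 * levelCard F 4 ≤ (Fintype.card α).choose 3 := by
  have hex : ∀ P : Finset α, ∃ T, P.card = 2 →
      P ⊆ T ∧ T.card = 3 ∧ ∀ S ∈ F, S.card = 4 → ¬ T ⊆ S := by
    intro P
    by_cases hP : P.card = 2
    · obtain ⟨x, hx, h⟩ := hF.exists_insert_not_subset hodd hP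
      exact ⟨insert x P, fun _ =>
        ⟨Finset.subset_insert x P, by rw [Finset.card_insert_of_notMem hx, hP], h⟩⟩
    · exact ⟨∅, fun h => absurd h hP⟩
  choose g hg using hex
  set A := (F.filter (fun S => S.card = 2)).image g
  set B := F.filter (fun S => S.card = 3)
  set D := (F.filter (fun S => S.card = 4)).biUnion (Finset.powersetCard 3) with hD
  have cA : A.card = levelCard F 2 := by
    refine Finset.card_image_of_injOn fun P hP Q hQ hPQ => ?_
    simp only [Finset.coe_filter, Set.mem_ofPred_eq] at hP hQ
    have hgP := hg P hP.2
    have hgQ := hg Q hQ.2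
    have hPQ' : g P = g Q := hPQ
    rw [← hPQ'] at hgQ
    have hu := Finset.card_le_card (Finset.union_subset hgP.1 hgQ.1)
    have hi := Finset.card_union_add_card_inter P Q
    refine hF.eq_of_subset_inter (P := P ∩ Q) hP.1 hQ.1 Finset.inter_subset_left
      Finset.inter_subset_right ?_ ?_ <;> omega
  have cD : D.card = 4 * levelCard F 4 := by
    rw [hD, Finset.card_biUnion]
    · rw [Finset.sum_congr rfl (g := fun _ => 4) (fun S hS => by
        rw [Finset.card_powersetCard, (Finset.mem_filter.1 hS).2]; rfl)]
      rw [Finset.sum_const, smul_eq_mul, mul_comm, levelCard]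
    · intro S hS T hT hne
      rw [Function.onFun, Finset.disjoint_left]
      intro P hPS hPT
      rw [Finset.mem_powersetCard] at hPS hPT
      rw [Finset.mem_coe, Finset.mem_filter] at hS hT
      exact hne (hF.eq_of_subset_inter hS.1 hT.1 hPS.1 hPT.1 (by omega) (by omega))
  have dAB : Disjoint A B := by
    rw [Finset.disjoint_left]
    intro T hTA hTB
    obtain ⟨P, hP, rfl⟩ := Finset.mem_image.1 hTA
    rw [Finset.mem_filter] at hP hTB
    have hgP := hg P hP.2
    have := hF.eq_of_subset_inter hP.1 hTB.1 (Finset.Subset.refl P) hgP.1 (by omega) (by omega)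
    have := congrArg Finset.card this
    omega
  have dABD : Disjoint (A ∪ B) D := by
    rw [Finset.disjoint_left]
    intro T hTAB hTD
    obtain ⟨S, hS, hTS⟩ := Finset.mem_biUnion.1 hTD
    rw [Finset.mem_filter] at hS
    rw [Finset.mem_powersetCard] at hTS
    rcases Finset.mem_union.1 hTAB with hTA | hTB
    · obtain ⟨P, hP, rfl⟩ := Finset.mem_image.1 hTA
      exact (hg P (Finset.mem_filter.1 hP).2).2.2 S hS.1 hS.2 hTS.1
    · rw [Finset.mem_filter] at hTB
      have := hF.eq_of_subset_inter hTB.1 hS.1 (Finset.Subset.refl T) hTS.1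
        (by omega) (by omega)
      have := congrArg Finset.card this
      omega
  have hsub : A ∪ B ∪ D ⊆ Finset.powersetCard 3 Finset.univ := by
    intro T hT
    rw [Finset.mem_powersetCard_univ]
    simp only [Finset.mem_union] at hT
    rcases hT with (hTA | hTB) | hTD
    · obtain ⟨P, hP, rfl⟩ := Finset.mem_image.1 hTA
      exact (hg P (Finset.mem_filter.1 hP).2).2.1
    · exact (Finset.mem_filter.1 hTB).2
    · obtain ⟨S, -, hTS⟩ := Finset.mem_biUnion.1 hTD
      exact (Finset.mem_powersetCard.1 hTS).2
  have h := Finset.card_le_card hsub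
  rw [Finset.card_powersetCard, Finset.card_univ, Finset.card_union_of_disjoint dABD,
    Finset.card_union_of_disjoint dAB, cA, cD] at h
  exact h

theorem IsAsymFamily.compls {F : Finset (Finset α)} (hF : IsAsymFamily F) :
    IsAsymFamily (F.image (fun S => Sᶜ)) := by
  intro S hS T hT h1 h2
  obtain ⟨S, hSF, rfl⟩ := Finset.mem_image.1 hS
  obtain ⟨T, hTF, rfl⟩ := Finset.mem_image.1 hT
  rw [compl_sdiff_compl] at h1 h2
  rw [hF S hSF T hTF h2 h1]

theorem levelCard_compls (F : Finset (Finset α)) {j k : ℕ} (h : j + k = Fintype.card α) :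
    levelCard (F.image (fun S => Sᶜ)) j = levelCard F k := by
  rw [levelCard, levelCard, Finset.filter_image,
    Finset.card_image_of_injective _ compl_injective]
  congr 1
  refine Finset.filter_congr fun S _ => ?_
  have := Finset.card_le_univ S
  rw [Finset.card_compl]
  omega

/-- A family of 62 subsets of a 9-set correcting one asymmetric error has total size at least
273. -/
theorem IsAsymFamily.sum_card_ge {F : Finset (Finset α)} (hF : IsAsymFamily F)
    (h9 : Fintype.card α = 9) (hcard : F.card = 62) : 273 ≤ ∑ S ∈ F, S.card := by
  have hodd : Odd (Fintype.card α) := by rw [h9]; decide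
  have a1 := hF.levelCard_zero_add_levelCard_one_le
  have a2 := hF.two_mul_levelCard_two_le
  have a3 := hF.sum_levelCard_two_three_le
  have a4 := hF.four_mul_levelCard_four_le
  have a5 := hF.levelCard_two_three_four_le hodd
  have b1 := hF.compls.levelCard_zero_add_levelCard_one_le
  have b2 := hF.compls.two_mul_levelCard_two_le
  have b3 := hF.compls.sum_levelCard_two_three_le
  have b4 := hF.compls.four_mul_levelCard_four_le
  have b5 := hF.compls.levelCard_two_three_four_le hodd
  rw [levelCard_compls F (j := 0) (k := 9) (by omega),
    levelCard_compls F (j := 1) (k := 8) (by omega)] at b1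
  rw [levelCard_compls F (j := 2) (k := 7) (by omega)] at b2 b3 b5
  rw [levelCard_compls F (j := 3) (k := 6) (by omega)] at b3 b5
  rw [levelCard_compls F (j := 4) (k := 5) (by omega)] at b4 b5
  rw [card_eq_sum_levelCard] at hcard
  rw [sum_card_eq_sum_mul_levelCard]
  have hch : Nat.choose 9 3 = 84 := rfl
  simp only [h9, hch, Finset.sum_range_succ, Finset.sum_range_zero] at *
  have lo : levelCard F 2 + levelCard F 3 + levelCard F 4 ≤ 30 := by
    have : levelCard F 2 + levelCard F 3 ≤ 13 := by omega
    rcases Nat.lt_or_ge (levelCard F 4) 18 with h | h <;> omega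
  have hi : levelCard F 7 + levelCard F 6 + levelCard F 5 ≤ 30 := by
    have : levelCard F 7 + levelCard F 6 ≤ 13 := by omega
    rcases Nat.lt_or_ge (levelCard F 5) 18 with h | h <;> omega
  have : levelCard F 2 + levelCard F 3 + levelCard F 4 = 30 := by omega
  have : levelCard F 7 + levelCard F 6 + levelCard F 5 = 30 := by omega
  have : 17 ≤ levelCard F 4 := by omega
  omega

end Family

/-- The set of positions where a binary word is one. -/
def wordSupport {n : ℕ} (a : Fin n → Bool) : Finset (Fin n) :=
  Finset.univ.filter (fun i => a i = true)

theorem wordSupport_injective {n : ℕ} :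
    Function.Injective (wordSupport : (Fin n → Bool) → Finset (Fin n)) := by
  intro a b h
  funext i
  have := Finset.ext_iff.1 h i
  rw [Bool.eq_iff_iff]
  simpa only [wordSupport, Finset.mem_filter, Finset.mem_univ, true_and] using this

theorem card_wordSupport_sdiff {n : ℕ} (a b : Fin n → Bool) :
    (wordSupport b \ wordSupport a).card = NN a b := by
  rw [NN]
  congr 1
  ext i
  simp [wordSupport, and_comm]

theorem IsZCode.isAsymFamily {n : ℕ} {C : Finset (Fin n → Bool)} (hC : IsZCode C) :
    IsAsymFamily (C.image wordSupport) := by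
  intro S hS T hT h1 h2
  obtain ⟨a, ha, rfl⟩ := Finset.mem_image.1 hS
  obtain ⟨b, hb, rfl⟩ := Finset.mem_image.1 hT
  rw [card_wordSupport_sdiff] at h1 h2
  by_contra hne
  have := hC a ha b hb (fun h => hne (congrArg _ h))
  rw [dZ] at this
  omega

theorem wordSupport_subset_of_le {n : ℕ} {y a : Fin n → Bool} (h : ∀ i, y i ≤ a i) :
    wordSupport y ⊆ wordSupport a := by
  intro i hi
  simp only [wordSupport, Finset.mem_filter, Finset.mem_univ, true_and] at hi ⊢
  exact h i hi

theorem NN_le_one_of_mem_ball {n : ℕ} {a b y : Fin n → Bool} (ha : y ∈ ball a)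
    (hb : y ∈ ball b) : NN a b ≤ 1 := by
  simp only [ball, Finset.mem_filter, Finset.mem_univ, true_and] at ha hb
  have hsub := wordSupport_subset_of_le hb.1
  have hsub' := wordSupport_subset_of_le ha.1
  rw [← card_wordSupport_sdiff]
  refine (Finset.card_le_card (Finset.sdiff_subset_sdiff
    (Finset.Subset.refl (wordSupport b)) hsub')).trans ?_
  rw [Finset.card_sdiff_of_subset hsub]
  exact hb.2

theorem IsZCode.pairwiseDisjoint_ball {n : ℕ} {C : Finset (Fin n → Bool)} (hC : IsZCode C) :
    (C : Set (Fin n → Bool)).PairwiseDisjoint ball := by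
  intro a ha b hb hne
  rw [Function.onFun, Finset.disjoint_left]
  intro y hya hyb
  have h := hC a ha b hb hne
  have h1 := NN_le_one_of_mem_ball hya hyb
  have h2 := NN_le_one_of_mem_ball hyb hya
  rw [dZ] at h
  omega

theorem wordSupport_update_false {n : ℕ} (a : Fin n → Bool) (i : Fin n) :
    wordSupport (Function.update a i false) = (wordSupport a).erase i := by
  ext j
  by_cases h : j = i
  · subst h
    simp [wordSupport]
  · simp [wordSupport, h]

theorem wt_add_one_le_card_ball {n : ℕ} (a : Fin n → Bool) : wt a + 1 ≤ (ball a).card := by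
  have hinj : Set.InjOn (fun i => Function.update a i false) (wordSupport a) := by
    intro i hi j hj hij
    have h := congrArg wordSupport hij
    simp only [wordSupport_update_false] at h
    exact (Finset.erase_inj _ hi).1 h
  have hnot : a ∉ (wordSupport a).image (fun i => Function.update a i false) := by
    intro h
    obtain ⟨i, hi, h⟩ := Finset.mem_image.1 h
    have h' := congrArg wordSupport h
    rw [wordSupport_update_false] at h'
    exact Finset.erase_eq_self.1 h' hi
  have hw : wt a = ((wordSupport a).image (fun i => Function.update a i false)).card :=
    (Finset.card_image_of_injOn hinj).symm
  rw [hw, ← Finset.card_insert_of_notMem hnot]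
  refine Finset.card_le_card fun y hy => ?_
  rw [ball, Finset.mem_filter]
  refine ⟨Finset.mem_univ y, ?_⟩
  rcases Finset.mem_insert.1 hy with rfl | hy
  · exact ⟨fun i => le_rfl, by omega⟩
  · obtain ⟨i, hi, rfl⟩ := Finset.mem_image.1 hy
    refine ⟨fun j => ?_, ?_⟩
    · by_cases h : j = i
      · subst h
        simp
      · simp [h]
    · change (wordSupport a).card - (wordSupport (Function.update a i false)).card ≤ 1
      rw [wordSupport_update_false, Finset.card_erase_of_mem hi]
      omega

theorem IsZCode.freeCount_add_sum_wt_le {n : ℕ} {C : Finset (Fin n → Bool)} (hC : IsZCode C) :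
    freeCount C + (∑ a ∈ C, wt a + C.card) ≤ 2 ^ n := by
  have hfree : freeCount C = ((C.biUnion ball)ᶜ).card := by
    rw [freeCount]
    congr 1
    ext y
    simp
  have hb : ∑ a ∈ C, wt a + C.card ≤ (C.biUnion ball).card := by
    rw [Finset.card_biUnion hC.pairwiseDisjoint_ball, Finset.card_eq_sum_ones,
      ← Finset.sum_add_distrib]
    exact Finset.sum_le_sum fun a _ => wt_add_one_le_card_ball a
  have h := Finset.card_add_card_compl (C.biUnion ball)
  have hc : Fintype.card (Fin n → Bool) = 2 ^ n := by simp
  omega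

theorem free_points_upper_bound_length_9 :
    ∀ C : Finset (Fin 9 → Bool), IsZCode C → C.card = 62 → freeCount C ≤ 177 := by
  intro C hC hcard
  have h := hC.freeCount_add_sum_wt_le
  have hF := hC.isAsymFamily.sum_card_ge (by simp)
    ((Finset.card_image_of_injective C wordSupport_injective).trans hcard)
  rw [Finset.sum_image wordSupport_injective.injOn] at hF
  have hF' : 273 ≤ ∑ a ∈ C, wt a := hF
  omega
end
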